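/- Let ν_n ∈ ℝⁿ be weakly decreasing (ν_n(1) ≥ ν_n(2) ≥ … ≥ ν_n(n)) with n ≥ 2. Then V_n(ν_n)/V_n(τ_n) ≤ (ν_n(1) − ν_n(n))^{n(n−1)/2} / ∏_{k=1}^{n−1} (k·⌊(n−1)/k⌋)^{k}. -/

import Mathlib

/-!
Put `m = n - 1` and `L = ν 1 - ν n`. Since `V_n(τ_n)` is the superfactorial `sf m`, the claim reads
`V_n(ν) * ∏_{k ≤ m} (k ⌊m/k⌋)^k ≤ sf m * L^(n(n-1)/2)`.

Rescale the points to `[-1, 1]` and write the Vandermonde determinant in the basis of monic Chebyshev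
polynomials. Hadamard's determinant inequality and `|T_j| ≤ 1` on `[-1, 1]` give
`V_n(ν)^2 * 4^(m^2) ≤ n^n * L^(n(n-1))` (`vmd_sq_le`). It then suffices that
`n^n * (∏ (k ⌊m/k⌋)^k)^2 ≤ 4^(m^2) * (sf m)^2` (`floor_bound`). This is a finite computation for
`m = 1, 3, 5`. For `m ≥ 6` one bounds `k ⌊m/k⌋` by `m` for `k ≤ m/2`, and it equals `k` for `k > m/2`
(`prod_floor_sq_le`); the resulting inequality is proved by induction on `⌊m/2⌋` with Stirling's
lower bound for factorials (`logBound_even_step`, `logBound_odd_step`).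

The numerical inequality fails for `n = 3` and `n = 5`, which are treated directly: `n = 3` is
`4xy ≤ (x + y)^2`, and `n = 5` is a weighted AM–GM inequality for the factors of the Vandermonde
product (`five_points`).
-/

noncomputable section

/-- The Vandermonde determinant `∏_{i<j} (x i - x j)`. -/
def vmd (n : ℕ) (x : Fin n → ℝ) : ℝ :=
  ∏ p ∈ Finset.univ.filter (fun p : Fin n × Fin n => p.1 < p.2), (x p.1 - x p.2)

/-- `τ_n = ((n-1)/2, (n-3)/2, …, -(n-1)/2)`. -/
def tauv (n : ℕ) : Fin n → ℝ := fun i => ((n : ℝ) - 1) / 2 - (i.val : ℝ)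

open Finset

/-! ### The Chebyshev–Hadamard bound -/

/-- Hadamard's determinant inequality, in terms of the Euclidean norms of the rows. -/
theorem abs_det_le_prod {n : ℕ} (A : Matrix (Fin n) (Fin n) ℝ) :
    |A.det| ≤ ∏ i, √(∑ j, A i j ^ 2) := by
  let e := EuclideanSpace.basisFun (Fin n) ℝ
  have : Fact (Module.finrank ℝ (EuclideanSpace ℝ (Fin n)) = n) := ⟨by simp⟩
  have h := e.toBasis.orientation.abs_volumeForm_apply_le (fun i => WithLp.toLp 2 (A i))
  rw [Orientation.volumeForm_robust' _ e, Module.Basis.det_apply] at h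
  have hA : e.toBasis.toMatrix (fun i => WithLp.toLp 2 (A i)) = A.transpose := by
    ext i j
    simp [e, Module.Basis.toMatrix_apply]
  rw [hA, Matrix.det_transpose] at h
  simpa [EuclideanSpace.norm_eq] using h

theorem vmd_eq_prod {n : ℕ} (x : Fin n → ℝ) :
    vmd n x = ∏ i, ∏ j ∈ Ioi i, (x i - x j) := by
  unfold vmd
  rw [Finset.prod_filter, ← Finset.univ_product_univ, Finset.prod_product]
  refine Finset.prod_congr rfl fun i _ => ?_
  rw [← Finset.prod_filter]
  refine Finset.prod_congr ?_ fun _ _ => rfl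
  ext j; simp

theorem vmd_eq_det {n : ℕ} (x : Fin n → ℝ) :
    vmd n x = (Matrix.vandermonde fun i => - x i).det := by
  rw [vmd_eq_prod, Matrix.det_vandermonde]
  refine Finset.prod_congr rfl fun i _ => Finset.prod_congr rfl fun j _ => by ring

theorem vmd_tauv (m : ℕ) : vmd (m + 1) (tauv (m + 1)) = m.superFactorial := by
  rw [← Matrix.det_vandermonde_id_eq_superFactorial, vmd_eq_prod, Matrix.det_vandermonde]
  refine Finset.prod_congr rfl fun i _ => Finset.prod_congr rfl fun j _ => ?_
  simp only [tauv]; ring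

theorem vmd_affine {n : ℕ} (x : Fin n → ℝ) (c b : ℝ) :
    vmd n (fun i => c * x i + b) = c ^ (n * (n - 1) / 2) * vmd n x := by
  rw [vmd_eq_prod, vmd_eq_prod]
  have h : ∀ i j : Fin n, c * x i + b - (c * x j + b) = c * (x i - x j) := fun i j => by ring
  simp only [h, Finset.prod_mul_distrib, Finset.prod_const, Fin.card_Ioi,
    Finset.prod_pow_eq_pow_sum]
  rw [Fin.sum_univ_eq_sum_range (fun i => n - 1 - i) n, Finset.sum_range_reflect (fun i => i) n,
    Finset.sum_range_id]

/-- For nodes in `[-1, 1]` the Vandermonde determinant equals `det (p_j (x_i))` with the monic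
Chebyshev polynomials `p_j = 2 ^ (1 - j) T_j` (and `p_0 = 1`); Hadamard's inequality together with
`|T_j| ≤ 1` bounds its square by `(m + 1) ^ (m + 1) / 2 ^ (m (m - 1))`. -/
theorem det_vandermonde_sq_le {m : ℕ} (x : Fin (m + 1) → ℝ) (hx : ∀ i, |x i| ≤ 1) :
    (Matrix.vandermonde x).det ^ 2 * 2 ^ (m * (m - 1)) ≤ ((m : ℝ) + 1) ^ (m + 1) := by
  -- Truncated subtraction makes `c 0 = 1`, as it should be for `T_0 = 1`.
  let c : Fin (m + 1) → ℝ := fun j => ((2 : ℝ) ^ ((j : ℕ) - 1))⁻¹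
  let p : Fin (m + 1) → Polynomial ℝ := fun j =>
    Polynomial.C (c j) * Polynomial.Chebyshev.T ℝ (j : ℕ)
  have hc : ∀ j, 0 < c j := fun j => by positivity
  have hdeg : ∀ j, (p j).natDegree = j := fun j => by
    simp only [p]
    rw [Polynomial.natDegree_C_mul (hc j).ne', Polynomial.Chebyshev.natDegree_T]
    simp
  have hmon : ∀ j, (p j).Monic := fun j => by
    simp only [p]
    rw [Polynomial.Monic, Polynomial.leadingCoeff_mul, Polynomial.leadingCoeff_C,
      Polynomial.Chebyshev.leadingCoeff_T]
    simp [c]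
  rw [Matrix.det_eval_matrixOfPolynomials_eq_det_vandermonde x p hdeg hmon,
    ← Matrix.det_transpose]
  have h := abs_det_le_prod (Matrix.of fun i j => (p j).eval (x i)).transpose
  have hrow : ∀ j, √(∑ i, (Matrix.of fun i j => (p j).eval (x i)).transpose j i ^ 2)
      ≤ √(m + 1) * c j := fun j => by
    refine Real.sqrt_le_iff.2 ⟨by have := hc j; positivity, ?_⟩
    rw [mul_pow, Real.sq_sqrt (by positivity)]
    have : ∀ i, (Matrix.of fun i j => (p j).eval (x i)).transpose j i ^ 2 ≤ c j ^ 2 := fun i => by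
      have hT := Polynomial.Chebyshev.abs_eval_T_real_le_one (j : ℕ) (hx i)
      rw [← sq_le_one_iff_abs_le_one] at hT
      simp only [Matrix.transpose_apply, Matrix.of_apply, p, Polynomial.eval_mul,
        Polynomial.eval_C, mul_pow]
      exact mul_le_of_le_one_right (sq_nonneg _) hT
    refine (Finset.sum_le_sum fun i _ => this i).trans ?_
    simp
  have hprod := h.trans (Finset.prod_le_prod (fun _ _ => Real.sqrt_nonneg _) fun j _ => hrow j)
  have hcp : (∏ j, c j) ^ 2 * 2 ^ (m * (m - 1)) = 1 := by
    simp only [c]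
    rw [Fin.prod_univ_eq_prod_range (fun j => ((2 : ℝ) ^ (j - 1))⁻¹) (m + 1),
      Finset.prod_range_succ', Finset.prod_inv_distrib]
    simp only [Nat.add_sub_cancel]
    rw [Finset.prod_pow_eq_pow_sum, mul_pow, inv_pow, ← pow_mul, Finset.sum_range_id_mul_two]
    simp
  rw [Finset.prod_mul_distrib, Finset.prod_const, Finset.card_univ, Fintype.card_fin] at hprod
  have hsq := pow_le_pow_left₀ (abs_nonneg _) hprod 2
  rw [sq_abs] at hsq
  refine (mul_le_mul_of_nonneg_right hsq (by positivity)).trans ?_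
  rw [mul_pow, mul_assoc, hcp, ← pow_mul, mul_comm (m + 1) 2, pow_mul, Real.sq_sqrt (by positivity)]
  simp

/-- The Chebyshev–Hadamard bound rescaled to an interval of length `L = ν 0 - ν m`:
`V(ν) ≤ n ^ (n / 2) 2 ^ (-(n - 1) ^ 2) L ^ (n (n - 1) / 2)` with `n = m + 1`, stated in squared
form. -/
theorem vmd_sq_le (m : ℕ) (ν : Fin (m + 1) → ℝ) (hν : Antitone ν) (hL : 0 < ν 0 - ν (Fin.last m)) :
    vmd (m + 1) ν ^ 2 * 4 ^ (m ^ 2) ≤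
      ((m : ℝ) + 1) ^ (m + 1) * ((ν 0 - ν (Fin.last m)) ^ ((m + 1) * m / 2)) ^ 2 := by
  set L := ν 0 - ν (Fin.last m) with hLdef
  let x : Fin (m + 1) → ℝ := fun i => (2 * ν i - ν 0 - ν (Fin.last m)) / L
  have hx : ∀ i, |-x i| ≤ 1 := fun i => by
    have h0 := hν (Fin.zero_le i)
    have h1 := hν (Fin.le_last i)
    rw [abs_neg, abs_le]
    constructor
    · rw [le_div_iff₀ hL]; linarith
    · rw [div_le_iff₀ hL]; linarith
  have hνx : ν = fun i => L / 2 * x i + (ν 0 + ν (Fin.last m)) / 2 := by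
    funext i; simp only [x]; field_simp; ring
  have h := det_vandermonde_sq_le _ hx
  rw [← vmd_eq_det] at h
  have hv : vmd (m + 1) ν = (L / 2) ^ ((m + 1) * m / 2) * vmd (m + 1) x := by
    conv_lhs => rw [hνx]
    exact vmd_affine x _ _
  have he : (m + 1) * m / 2 * 2 + m * (m - 1) = 2 * m ^ 2 := by
    rw [Nat.div_mul_cancel (by rw [mul_comm]; exact Nat.even_mul_succ_self m |>.two_dvd)]
    cases m <;> simp; ring
  have h4 : (4 : ℝ) ^ (m ^ 2) = (2 ^ ((m + 1) * m / 2)) ^ 2 * 2 ^ (m * (m - 1)) := by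
    rw [← pow_mul, ← pow_add, he, pow_mul]; norm_num
  rw [hv, h4, div_pow]
  calc _ = (vmd (m + 1) x ^ 2 * 2 ^ (m * (m - 1))) * (L ^ ((m + 1) * m / 2)) ^ 2 := by
        field_simp
    _ ≤ _ := by gcongr

/-! ### The numerical inequality -/

/-- The hyperfactorial `∏_{k ≤ m} k ^ k`; the factor `0 ^ 0 = 1` is harmless. -/
def hyp (m : ℕ) : ℕ := ∏ k ∈ range (m + 1), k ^ k

theorem hyp_succ (m : ℕ) : hyp (m + 1) = hyp m * (m + 1) ^ (m + 1) :=
  Finset.prod_range_succ _ _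

theorem hyp_pos (m : ℕ) : 0 < hyp m := by
  induction m with
  | zero => simp [hyp]
  | succ m ih => rw [hyp_succ]; positivity

theorem sf_pos (m : ℕ) : 0 < m.superFactorial := by
  induction m with
  | zero => simp
  | succ m ih => rw [Nat.superFactorial_succ]; positivity

/-- Logarithm of the inequality
`(m+1)^(m+1) * m^(h(h+1)) * hyp m ^ 2 ≤ 4^(m^2) * sf m ^ 2 * hyp h ^ 2`, used with `h = ⌊m/2⌋`.
After division by `hyp h ^ 2`, the left side dominates `(m+1)^(m+1) (∏ (k ⌊m/k⌋)^k)^2`. -/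
def LogBound (m h : ℕ) : Prop :=
  ((m : ℝ) + 1) * Real.log (m + 1) + h * (h + 1) * Real.log m + 2 * Real.log (hyp m) ≤
    2 * m ^ 2 * Real.log 2 + 2 * Real.log m.superFactorial + 2 * Real.log (hyp h)

theorem logBound_iff {m h : ℕ} (hm : 0 < m) : LogBound m h ↔
    (m + 1) ^ (m + 1) * m ^ (h * (h + 1)) * hyp m ^ 2 ≤
      4 ^ (m ^ 2) * m.superFactorial ^ 2 * hyp h ^ 2 := by
  have h1 := hyp_pos m
  have h2 := hyp_pos h
  have h3 := sf_pos m
  rw [← Nat.cast_le (α := ℝ), ← Real.log_le_log_iff (by positivity) (by positivity)]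
  push_cast
  rw [Real.log_mul (by positivity) (by positivity), Real.log_mul (by positivity) (by positivity),
    Real.log_mul (by positivity) (by positivity), Real.log_mul (by positivity) (by positivity)]
  simp only [Real.log_pow]
  rw [show (4 : ℝ) = 2 ^ 2 by norm_num, Real.log_pow, LogBound]
  push_cast
  rw [← mul_assoc, mul_comm (2 : ℝ) ((m : ℝ) ^ 2)]

theorem log_hyp_succ (m : ℕ) :
    Real.log (hyp (m + 1)) = Real.log (hyp m) + (m + 1) * Real.log (m + 1) := by
  have := hyp_pos m
  rw [hyp_succ]
  push_cast
  rw [Real.log_mul (by positivity) (by positivity), Real.log_pow]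
  push_cast; rfl

theorem log_sf_succ (m : ℕ) :
    Real.log ((m + 1).superFactorial) = Real.log m.superFactorial +
      Real.log ((m + 1).factorial) := by
  have := sf_pos m
  rw [Nat.superFactorial_succ]
  push_cast
  rw [Real.log_mul (by positivity) (by positivity), add_comm]

theorem log_add_le {x d : ℝ} (hx : 0 < x) (hd : 0 ≤ d) :
    Real.log (x + d) ≤ Real.log x + d / x := by
  have h := Real.log_le_sub_one_of_pos (x := (x + d) / x) (by positivity)
  rw [Real.log_div (by positivity) hx.ne', add_div, div_self hx.ne'] at h
  linarith

/-- Passing from `m = 2p` to `m = 2p + 2`: by Stirling's lower bound for `(2p + 2)!` and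
`(2p+1)(2p+3) ≤ (2p+2)^2`, with `r = p + 1` everything reduces to
`(2r+1)^2 e^(9r) ≤ 4^(7r) (9/16) r^2`, true for `r ≥ 4`. -/
theorem logBound_even_step (p : ℕ) (hp : 3 ≤ p) (h : LogBound (2 * p) p) :
    LogBound (2 * (p + 1)) (p + 1) := by
  have hpR : (3 : ℝ) ≤ p := by exact_mod_cast hp
  have hst := Stirling.le_log_factorial_stirling (n := 2 * p + 1 + 1) (by omega)
  have hf : Real.log ((2 * p + 1 + 1).factorial) =
      Real.log ((2 * p + 1).factorial) + Real.log (2 * p + 2) := by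
    rw [Nat.factorial_succ (2 * p + 1)]
    push_cast
    rw [Real.log_mul (by positivity) (by positivity), add_comm]
    ring_nf
  have hA : (p : ℝ) * (p + 1) * Real.log (2 * p + 2) ≤
      p * (p + 1) * Real.log (2 * p) + (p + 1) := by
    have := log_add_le (x := 2 * (p : ℝ)) (d := 2) (by positivity) (by norm_num)
    calc _ ≤ (p : ℝ) * (p + 1) * (Real.log (2 * p) + 2 / (2 * p)) := by gcongr
      _ = _ := by field_simp
  have hB : (2 * (p : ℝ) + 1) * (Real.log (2 * p + 1) + Real.log (2 * p + 3)) ≤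
      (2 * p + 1) * (2 * Real.log (2 * p + 2)) := by
    gcongr
    rw [← Real.log_mul (by positivity) (by positivity),
      show 2 * Real.log (2 * (p : ℝ) + 2) = Real.log ((2 * p + 2) ^ 2) by
        rw [Real.log_pow]; push_cast; rfl]
    gcongr
    nlinarith
  have hC : Real.log (2 * p + 2) = Real.log 2 + Real.log ((p : ℝ) + 1) := by
    rw [← Real.log_mul (by positivity) (by positivity)]; ring_nf
  have hD : Real.log (2 * p + 3) ≤ Real.log ((p : ℝ) + 1) + Real.log (9 / 4) := by
    rw [← Real.log_mul (by positivity) (by positivity)]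
    gcongr
    linarith
  -- Equivalently `e ^ 9 * (7 / 4) ≤ 4 ^ 7`; the exponential rate gained per step.
  have hE : Real.log (7 / 4) + 9 ≤ 14 * Real.log 2 := by
    have h6 : 6 * Real.log (7 / 4) ≤ 5 * Real.log 2 := by
      rw [show (6 : ℝ) * Real.log (7 / 4) = Real.log ((7 / 4) ^ 6) by
        rw [Real.log_pow]; push_cast; rfl, show (5 : ℝ) * Real.log 2 = Real.log (2 ^ 5) by
        rw [Real.log_pow]; push_cast; rfl]
      exact Real.log_le_log (by norm_num) (by norm_num)
    linarith [Real.log_two_gt_d9]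
  have hF : Real.log 9 ≤ (p + 1) * Real.log (7 / 4) := by
    have h4 : Real.log 9 ≤ 4 * Real.log (7 / 4) := by
      rw [show (4 : ℝ) * Real.log (7 / 4) = Real.log ((7 / 4) ^ 4) by
        rw [Real.log_pow]; push_cast; rfl]
      exact Real.log_le_log (by norm_num) (by norm_num)
    have : 0 ≤ Real.log (7 / 4) := Real.log_nonneg (by norm_num)
    nlinarith
  have hG : Real.log 6 ≤ Real.log (2 * Real.pi) :=
    Real.log_le_log (by norm_num) (by linarith [Real.pi_gt_three])
  have hE' := mul_le_mul_of_nonneg_left hE (by positivity : (0 : ℝ) ≤ p + 1)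
  have e9 : Real.log 9 = 2 * Real.log 3 := by
    rw [show (9 : ℝ) = 3 ^ 2 by norm_num, Real.log_pow]; push_cast; rfl
  have e94 : Real.log (9 / 4) = 2 * Real.log 3 - 2 * Real.log 2 := by
    rw [show (9 / 4 : ℝ) = (3 / 2) ^ 2 by norm_num, Real.log_pow,
      Real.log_div (by norm_num) (by norm_num)]
    push_cast; ring
  have e6 : Real.log 6 = Real.log 2 + Real.log 3 := by
    rw [← Real.log_mul (by norm_num) (by norm_num)]; norm_num
  unfold LogBound at h ⊢
  rw [show 2 * (p + 1) = 2 * p + 1 + 1 by ring, log_hyp_succ (2 * p + 1), log_hyp_succ (2 * p),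
    log_hyp_succ p, log_sf_succ, log_sf_succ]
  push_cast at h hst ⊢
  rw [show (2 * (p : ℝ) + 1 + 1) = 2 * p + 2 by ring] at hst ⊢
  rw [show (2 * (p : ℝ) + 2 + 1) = 2 * p + 3 by ring]
  rw [e94] at hD
  rw [e9] at hF
  rw [e6] at hG
  rw [hf] at hst ⊢
  rw [hC] at hA hB hst ⊢
  linarith

/-- The odd case `m = 2p + 1` follows from the even case `m = 2p` with the same cut-off `h = p`. -/
theorem logBound_odd_step (p : ℕ) (hp : 3 ≤ p) (h : LogBound (2 * p) p) :
    LogBound (2 * p + 1) p := by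
  have hpR : (3 : ℝ) ≤ p := by exact_mod_cast hp
  have hst := Stirling.le_log_factorial_stirling (n := 2 * p + 1) (by omega)
  have hA : (p : ℝ) * (p + 1) * Real.log (2 * p + 1) ≤
      p * (p + 1) * Real.log (2 * p) + (p + 1) / 2 := by
    have := log_add_le (x := 2 * (p : ℝ)) (d := 1) (by positivity) (by norm_num)
    calc _ ≤ (p : ℝ) * (p + 1) * (Real.log (2 * p) + 1 / (2 * p)) := by gcongr
      _ = _ := by field_simp
  have hB : (2 * (p : ℝ) + 2) * Real.log (2 * p + 2) ≤
      (2 * p + 2) * Real.log (2 * p + 1) + 8 / 7 := by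
    have := log_add_le (x := 2 * (p : ℝ) + 1) (d := 1) (by positivity) (by norm_num)
    rw [show 2 * (p : ℝ) + 1 + 1 = 2 * p + 2 by ring] at this
    calc _ ≤ (2 * (p : ℝ) + 2) * (Real.log (2 * p + 1) + 1 / (2 * p + 1)) := by gcongr
      _ = (2 * p + 2) * Real.log (2 * p + 1) + (2 * p + 2) / (2 * p + 1) := by ring
      _ ≤ _ := by
        refine add_le_add_right ?_ _
        rw [div_le_div_iff₀ (by positivity) (by norm_num)]
        linarith
  have hG : 0 ≤ Real.log (2 * Real.pi) := Real.log_nonneg (by linarith [Real.pi_gt_three])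
  have hE := mul_le_mul_of_nonneg_left Real.log_two_gt_d9.le (by positivity : (0 : ℝ) ≤ 8 * p + 2)
  unfold LogBound at h ⊢
  rw [log_hyp_succ (2 * p), log_sf_succ]
  push_cast at h hst ⊢
  rw [show (2 * (p : ℝ) + 1 + 1) = 2 * p + 2 by ring]
  nlinarith

theorem logBound_even (p : ℕ) (hp : 3 ≤ p) : LogBound (2 * p) p := by
  induction p, hp using Nat.le_induction with
  | base => exact (logBound_iff (by norm_num)).2 (by
      simp [hyp, Finset.prod_range_succ, Nat.superFactorial, Nat.factorial])
  | succ p hp ih => exact logBound_even_step p hp ih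

theorem logBound_half (m : ℕ) (hm : 6 ≤ m) : LogBound m (m / 2) := by
  obtain h | h := Nat.even_or_odd' m |>.choose_spec
  all_goals
    set p := (Nat.even_or_odd' m).choose
    have hp : 3 ≤ p := by omega
    have hh : m / 2 = p := by omega
    rw [hh, h]
  · exact logBound_even p hp
  · exact logBound_odd_step p hp (logBound_even p hp)

/-- Bounds `k ⌊m/k⌋` by `m` for `k ≤ m/2`, and uses `⌊m/k⌋ = 1` for `k > m/2`. -/
theorem prod_floor_sq_le (m : ℕ) :
    (∏ k ∈ Icc 1 m, (k * (m / k)) ^ k) ^ 2 * hyp (m / 2) ^ 2 ≤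
      m ^ (m / 2 * (m / 2 + 1)) * hyp m ^ 2 := by
  set h := m / 2 with hh
  have hI : Icc 1 m = Ico 1 (m + 1) := by ext; simp
  have hsplit : hyp m = hyp h * ∏ k ∈ Ico (h + 1) (m + 1), k ^ k := by
    rw [hyp, hyp, Finset.prod_range_mul_prod_Ico _ (by omega)]
  have hlow : ∏ k ∈ Ico 1 (h + 1), (k * (m / k)) ^ k ≤ ∏ k ∈ range (h + 1), m ^ k := by
    rw [Finset.range_eq_Ico, Finset.prod_eq_prod_Ico_succ_bot (Nat.succ_pos h), pow_zero, one_mul]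
    exact Finset.prod_le_prod' fun k _ => Nat.pow_le_pow_left (Nat.mul_div_le m k) k
  have hhigh : ∏ k ∈ Ico (h + 1) (m + 1), (k * (m / k)) ^ k =
      ∏ k ∈ Ico (h + 1) (m + 1), k ^ k := by
    refine Finset.prod_congr rfl fun k hk => ?_
    rw [Finset.mem_Ico] at hk
    rw [show m / k = 1 from Nat.div_eq_of_lt_le (by omega) (by omega), mul_one]
  rw [hI, ← Finset.prod_Ico_consecutive _ (by omega : 1 ≤ h + 1) (by omega : h + 1 ≤ m + 1),
    hhigh, hsplit]
  have hpow : (∏ k ∈ range (h + 1), m ^ k) ^ 2 = m ^ (h * (h + 1)) := by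
    rw [Finset.prod_pow_eq_pow_sum, ← pow_mul, Finset.sum_range_id_mul_two, mul_comm, Nat.add_sub_cancel]
  rw [← hpow]
  calc _ = (∏ k ∈ Ico 1 (h + 1), (k * (m / k)) ^ k) ^ 2 *
        (hyp h * ∏ k ∈ Ico (h + 1) (m + 1), k ^ k) ^ 2 := by ring
    _ ≤ _ := by gcongr

/-- The numerical inequality that compares the Chebyshev–Hadamard bound with the claimed one. It is
false for `m = 2` and `m = 4`. -/
theorem floor_bound (m : ℕ) (hm : 6 ≤ m ∨ m = 1 ∨ m = 3 ∨ m = 5) :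
    (m + 1) ^ (m + 1) * (∏ k ∈ Icc 1 m, (k * (m / k)) ^ k) ^ 2 ≤
      4 ^ (m ^ 2) * m.superFactorial ^ 2 := by
  rcases hm with hm | rfl | rfl | rfl
  · have h1 := (logBound_iff (by omega)).1 (logBound_half m hm)
    have h2 := prod_floor_sq_le m
    have h3 := hyp_pos (m / 2)
    refine Nat.le_of_mul_le_mul_right (c := hyp (m / 2) ^ 2) ?_ (by positivity)
    calc _ = (m + 1) ^ (m + 1) * ((∏ k ∈ Icc 1 m, (k * (m / k)) ^ k) ^ 2 * hyp (m / 2) ^ 2) := by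
          ring
      _ ≤ (m + 1) ^ (m + 1) * (m ^ (m / 2 * (m / 2 + 1)) * hyp m ^ 2) := by gcongr
      _ ≤ _ := by rw [← mul_assoc]; exact h1
  all_goals decide +kernel

/-! ### Three and five points -/

/-- Weighted AM–GM, through `y ≤ exp (y - 1)`, for the gaps `a, b, c, d` of five points. The weights
are the reciprocals of rational approximations to the values of the nine factors at the maximizing
(Fekete) configuration, where the gaps are about `1/6, 1/3, 1/3, 1/6`. -/
theorem five_points {a b c d : ℝ} (ha : 0 ≤ a) (hb : 0 ≤ b) (hc : 0 ≤ c) (hd : 0 ≤ d)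
    (hs : a + b + c + d = 1) :
    a * b * c * d * (a + b) * (b + c) * (c + d) * (a + b + c) * (b + c + d) * 1536 ≤ 1 := by
  let y : Fin 9 → ℝ := ![6 * a, 3 * b, 3 * c, 6 * d, 2 * (a + b), 3 / 2 * (b + c), 2 * (c + d),
    6 / 5 * (a + b + c), 6 / 5 * (b + c + d)]
  have hy : ∀ i, 0 ≤ y i := by
    intro i; fin_cases i <;> simp [y] <;> positivity
  have h : ∏ i, y i ≤ Real.exp (∑ i, (y i - 1)) := by
    rw [Real.exp_sum]
    exact Finset.prod_le_prod (fun i _ => hy i) fun i _ => by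
      linarith [Real.add_one_le_exp (y i - 1)]
  have hsum : ∑ i, (y i - 1) ≤ 1 / 5 := by
    simp [y, Fin.sum_univ_succ]
    linarith
  have hexp : Real.exp (1 / 5) ≤ 5 / 4 := by
    have := Real.exp_bound_div_one_sub_of_interval (x := 1 / 5) (by norm_num) (by norm_num)
    norm_num at this ⊢
    exact this
  have h' := h.trans ((Real.exp_le_exp.2 hsum).trans hexp)
  simp [y, Fin.prod_univ_succ] at h'
  nlinarith

theorem vmd_three_le (ν : Fin 3 → ℝ) (hν : Antitone ν) :
    vmd 3 ν * 4 ≤ (ν 0 - ν 2) ^ 3 := by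
  have h1 : ν 1 ≤ ν 0 := hν (by decide)
  have h2 : ν 2 ≤ ν 1 := hν (by decide)
  have : vmd 3 ν = (ν 0 - ν 1) * (ν 1 - ν 2) * (ν 0 - ν 2) := by
    simp [vmd, Finset.prod_filter, Fintype.prod_prod_type, Fin.prod_univ_three]
    ring
  rw [this]
  nlinarith [mul_nonneg (sub_nonneg.2 (h2.trans h1)) (sq_nonneg (ν 0 - ν 1 - (ν 1 - ν 2)))]

theorem vmd_five_le (ν : Fin 5 → ℝ) (hν : Antitone ν) (hL : 0 < ν 0 - ν 4) :
    vmd 5 ν * 1536 ≤ (ν 0 - ν 4) ^ 10 := by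
  set L := ν 0 - ν 4 with hLdef
  have h1 : ν 1 ≤ ν 0 := hν (by decide)
  have h2 : ν 2 ≤ ν 1 := hν (by decide)
  have h3 : ν 3 ≤ ν 2 := hν (by decide)
  have h4 : ν 4 ≤ ν 3 := hν (by decide)
  have h := five_points (div_nonneg (sub_nonneg.2 h1) hL.le) (div_nonneg (sub_nonneg.2 h2) hL.le)
    (div_nonneg (sub_nonneg.2 h3) hL.le) (div_nonneg (sub_nonneg.2 h4) hL.le)
    (by field_simp; rw [hLdef]; ring)
  have hv : vmd 5 ν = (ν 0 - ν 1) * (ν 1 - ν 2) * (ν 2 - ν 3) * (ν 3 - ν 4) *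
      (ν 0 - ν 2) * (ν 1 - ν 3) * (ν 2 - ν 4) * (ν 0 - ν 3) * (ν 1 - ν 4) * L := by
    simp [vmd, Finset.prod_filter, Fintype.prod_prod_type, Fin.prod_univ_five, hLdef]
    ring
  simp only [← add_div, sub_add_sub_cancel] at h
  rw [hv]
  calc _ = ((ν 0 - ν 1) / L * ((ν 1 - ν 2) / L) * ((ν 2 - ν 3) / L) * ((ν 3 - ν 4) / L) *
      ((ν 0 - ν 2) / L) * ((ν 1 - ν 3) / L) * ((ν 2 - ν 4) / L) * ((ν 0 - ν 3) / L) *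
      ((ν 1 - ν 4) / L) * 1536) * L ^ 10 := by field_simp
    _ ≤ 1 * L ^ 10 := by gcongr
    _ = _ := one_mul _

/-! ### Conclusion -/

/-- The theorem with denominators cleared, for `n = m + 1` and distinct endpoints. -/
theorem vmd_mul_prod_le (m : ℕ) (hm : 1 ≤ m) (ν : Fin (m + 1) → ℝ) (hν : Antitone ν)
    (hL : 0 < ν 0 - ν (Fin.last m)) :
    vmd (m + 1) ν * ((∏ k ∈ Icc 1 m, (k * (m / k)) ^ k : ℕ) : ℝ) ≤
      (ν 0 - ν (Fin.last m)) ^ ((m + 1) * m / 2) * m.superFactorial := by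
  have hcases : (6 ≤ m ∨ m = 1 ∨ m = 3 ∨ m = 5) ∨ m = 2 ∨ m = 4 := by omega
  rcases hcases with hm | rfl | rfl
  · have h1 := vmd_sq_le m ν hν hL
    have h2 : ((m : ℝ) + 1) ^ (m + 1) * ((∏ k ∈ Icc 1 m, (k * (m / k)) ^ k : ℕ) : ℝ) ^ 2 ≤
        4 ^ (m ^ 2) * (m.superFactorial : ℝ) ^ 2 := by
      exact_mod_cast floor_bound m hm
    refine abs_le_of_sq_le_sq' ?_ (by positivity) |>.2
    refine le_of_mul_le_mul_right (a := (4 : ℝ) ^ (m ^ 2)) ?_ (by positivity)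
    generalize ((∏ k ∈ Icc 1 m, (k * (m / k)) ^ k : ℕ) : ℝ) = P at h2 ⊢
    calc _ = (vmd (m + 1) ν ^ 2 * 4 ^ (m ^ 2)) * P ^ 2 := by ring
      _ ≤ _ := mul_le_mul_of_nonneg_right h1 (sq_nonneg P)
      _ = ((m : ℝ) + 1) ^ (m + 1) * P ^ 2 *
          ((ν 0 - ν (Fin.last m)) ^ ((m + 1) * m / 2)) ^ 2 := by ring
      _ ≤ _ := mul_le_mul_of_nonneg_right h2 (sq_nonneg _)
      _ = _ := by ring
  · have h := vmd_three_le ν hν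
    have hP : ∏ k ∈ Icc 1 2, (k * (2 / k)) ^ k = 8 := by decide
    have hS : Nat.superFactorial 2 = 2 := by decide
    rw [hP, hS]
    have hl : Fin.last 2 = 2 := rfl
    norm_num [hl]
    linarith
  · have h := vmd_five_le ν hν hL
    have hP : ∏ k ∈ Icc 1 4, (k * (4 / k)) ^ k = 288 * 1536 := by decide +kernel
    have hS : Nat.superFactorial 4 = 288 := by decide
    rw [hP, hS]
    have hl : Fin.last 4 = 4 := rfl
    norm_num [hl]
    linarith

/-- For weakly decreasing `ν ∈ ℝⁿ` with `n ≥ 2`,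
`V_n(ν)/V_n(τ_n) ≤ (ν 1 − ν n)^{n(n−1)/2} / ∏_{k=1}^{n−1} (k ⌊(n−1)/k⌋)^k`. -/
theorem stmt_9 (n : ℕ) (hn : 2 ≤ n) (ν : Fin n → ℝ) (hν : Antitone ν) :
    vmd n ν / vmd n (tauv n) ≤
      (ν ⟨0, by omega⟩ - ν ⟨n - 1, by omega⟩) ^ (n * (n - 1) / 2) /
        ∏ k ∈ Finset.Icc 1 (n - 1), ((k * ((n - 1) / k) : ℕ) : ℝ) ^ k := by
  obtain ⟨m, rfl⟩ : ∃ m, n = m + 1 := ⟨n - 1, by omega⟩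
  have hP : 0 < ∏ k ∈ Icc 1 m, (k * (m / k)) ^ k := by
    refine Finset.prod_pos fun k hk => pow_pos (Nat.mul_pos ?_ (Nat.div_pos ?_ ?_)) k <;>
      rw [Finset.mem_Icc] at hk <;> omega
  have hS := sf_pos m
  have hcast : ∏ k ∈ Icc 1 m, ((k * (m / k) : ℕ) : ℝ) ^ k =
      ((∏ k ∈ Icc 1 m, (k * (m / k)) ^ k : ℕ) : ℝ) := by push_cast; rfl
  rw [vmd_tauv]
  change vmd (m + 1) ν / _ ≤ (ν 0 - ν (Fin.last m)) ^ ((m + 1) * m / 2) /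
    ∏ k ∈ Icc 1 m, ((k * (m / k) : ℕ) : ℝ) ^ k
  rw [hcast, div_le_div_iff₀ (by positivity) (by exact_mod_cast hP)]
  rcases (sub_nonneg.2 (hν (Fin.zero_le (Fin.last m)))).lt_or_eq with hL | hL
  · exact vmd_mul_prod_le m (by omega) ν hν hL
  · -- If the endpoints coincide, the factor of the pair `(1, n)` vanishes.
    have hv : vmd (m + 1) ν = 0 := by
      refine Finset.prod_eq_zero (i := (0, Fin.last m)) ?_ hL.symm
      simp only [Finset.mem_filter, Finset.mem_univ, true_and]
      exact Fin.lt_def.2 (by simp; omega)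
    rw [hv, zero_mul, ← hL]
    positivity
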